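/- Let R be an orthogonally convex rectangle complex, let C be a cell of R, and let d be one of the four axis directions. Then C is d-extensible (i.e., there exists a rectangular extension of R in which the d-side of C lies on the boundary of the extension) if and only if no cell of R is adjacent to C on the d-side of C. -/

import Mathlib

open scoped BigOperators

/-- An axis-aligned closed rectangle with positive width and height. -/
structure Rect where
  x1 : ℝ
  x2 : ℝ
  y1 : ℝ
  y2 : ℝ
  hx : x1 < x2
  hy : y1 < y2

namespace Rect

/-- The closed rectangle as a set of points of the plane. -/
def toSet (R : Rect) : Set (ℝ × ℝ) :=
  {p | R.x1 ≤ p.1 ∧ p.1 ≤ R.x2 ∧ R.y1 ≤ p.2 ∧ p.2 ≤ R.y2}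

/-- The open interior of the rectangle. -/
def inter (R : Rect) : Set (ℝ × ℝ) :=
  {p | R.x1 < p.1 ∧ p.1 < R.x2 ∧ R.y1 < p.2 ∧ p.2 < R.y2}

end Rect

/-- The four cardinal directions. -/
inductive Dir : Type
  | left | right | top | bottom
deriving DecidableEq, Repr

/-- The direction opposite to a given direction. -/
def Dir.neg : Dir → Dir
  | .left => .right
  | .right => .left
  | .top => .bottom
  | .bottom => .top

/-- `R.adjTo S d` : rectangle `S` lies in direction `d` of rectangle `R`, the two sharing a
boundary segment of positive length (adjacency with orientation `d`). -/
def Rect.adjTo (R S : Rect) : Dir → Prop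
  | .right  => R.x2 = S.x1 ∧ max R.y1 S.y1 < min R.y2 S.y2
  | .left   => S.x2 = R.x1 ∧ max R.y1 S.y1 < min R.y2 S.y2
  | .top    => R.y2 = S.y1 ∧ max R.x1 S.x1 < min R.x2 S.x2
  | .bottom => S.y2 = R.y1 ∧ max R.x1 S.x1 < min R.x2 S.x2

/-- A rectangle complex: a finite family of axis-aligned rectangles with pairwise disjoint
interiors such that any two rectangles are either completely disjoint or share a boundary
segment of positive length (in particular, no two rectangles meet in just a single point). -/
structure RectComplex (ι : Type) [Fintype ι] where
  cell : ι → Rect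
  disjInt : ∀ i j : ι, i ≠ j → Disjoint (cell i).inter (cell j).inter
  meet : ∀ i j : ι, i ≠ j →
    Disjoint (cell i).toSet (cell j).toSet ∨ ∃ d : Dir, (cell i).adjTo (cell j) d

namespace RectComplex

variable {ι : Type} [Fintype ι]

/-- The union of all cells of the complex. -/
def union (C : RectComplex ι) : Set (ℝ × ℝ) := ⋃ i : ι, (C.cell i).toSet

/-- The complex is rectangular if its union is a rectangle. -/
def IsRectangular (C : RectComplex ι) : Prop := ∃ R : Rect, C.union = R.toSet

/-- `C'.Extends C` : the complex `C'`, on the same index set (this indexing provides the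
bijection between the cells), preserves all adjacencies of `C` together with their
orientations.  (`C'` may have additional adjacencies.) -/
def Extends (C' C : RectComplex ι) : Prop :=
  ∀ i j : ι, ∀ d : Dir, (C.cell i).adjTo (C.cell j) d → (C'.cell i).adjTo (C'.cell j) d

/-- `C'` is a rectangular extension of `C`. -/
def IsRectExtension (C' C : RectComplex ι) : Prop :=
  C'.Extends C ∧ C'.IsRectangular

/-- Cell `i` is extreme in direction `d` with respect to the complex `C`: some point of the
cell is at least as far in direction `d` as every point of `C`. -/
def Extreme (C : RectComplex ι) (i : ι) : Dir → Prop
  | .right  => ∀ j : ι, (C.cell j).x2 ≤ (C.cell i).x2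
  | .left   => ∀ j : ι, (C.cell i).x1 ≤ (C.cell j).x1
  | .top    => ∀ j : ι, (C.cell j).y2 ≤ (C.cell i).y2
  | .bottom => ∀ j : ι, (C.cell i).y1 ≤ (C.cell j).y1

/-- Cell `i` is `d`-extensible: some rectangular extension of `C` makes it extreme in
direction `d` (its `d`-side then lies on the boundary of the extension). -/
def Extensible (C : RectComplex ι) (i : ι) (d : Dir) : Prop :=
  ∃ C' : RectComplex ι, C'.IsRectExtension C ∧ C'.Extreme i d

/-- The complex is orthogonally convex: every horizontal and every vertical line meets its
union in an order-connected (hence empty or a single segment) set. -/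
def OrthoConvex (C : RectComplex ι) : Prop :=
  (∀ y : ℝ, {x : ℝ | (x, y) ∈ C.union}.OrdConnected) ∧
  (∀ x : ℝ, {y : ℝ | (x, y) ∈ C.union}.OrdConnected)

end RectComplex

/-! ### Rectangles and adjacency -/

@[ext] theorem Rect.ext_coords {R S : Rect} (h1 : R.x1 = S.x1) (h2 : R.x2 = S.x2)
    (h3 : R.y1 = S.y1) (h4 : R.y2 = S.y2) : R = S := by
  cases R; cases S; simp_all

theorem Rect.mem_toSet {R : Rect} {x y : ℝ} :
    (x, y) ∈ R.toSet ↔ R.x1 ≤ x ∧ x ≤ R.x2 ∧ R.y1 ≤ y ∧ y ≤ R.y2 := Iff.rfl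

theorem Rect.mem_inter {R : Rect} {x y : ℝ} :
    (x, y) ∈ R.inter ↔ R.x1 < x ∧ x < R.x2 ∧ R.y1 < y ∧ y < R.y2 := Iff.rfl

theorem Rect.adjTo_right {R S : Rect} :
    R.adjTo S .right ↔ R.x2 = S.x1 ∧ R.y1 < S.y2 ∧ S.y1 < R.y2 := by
  have := R.hy
  have := S.hy
  simp only [Rect.adjTo, max_lt_iff, lt_min_iff]
  tauto

theorem Rect.adjTo_left {R S : Rect} :
    R.adjTo S .left ↔ S.x2 = R.x1 ∧ R.y1 < S.y2 ∧ S.y1 < R.y2 := by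
  have := R.hy
  have := S.hy
  simp only [Rect.adjTo, max_lt_iff, lt_min_iff]
  tauto

theorem Rect.adjTo_top {R S : Rect} :
    R.adjTo S .top ↔ R.y2 = S.y1 ∧ R.x1 < S.x2 ∧ S.x1 < R.x2 := by
  have := R.hx
  have := S.hx
  simp only [Rect.adjTo, max_lt_iff, lt_min_iff]
  tauto

theorem Rect.adjTo_bottom {R S : Rect} :
    R.adjTo S .bottom ↔ S.y2 = R.y1 ∧ R.x1 < S.x2 ∧ S.x1 < R.x2 := by
  have := R.hx
  have := S.hx
  simp only [Rect.adjTo, max_lt_iff, lt_min_iff]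
  tauto

/-- Two rectangles are adjacent if they are so in some direction. -/
def Rect.Adj (R S : Rect) : Prop := ∃ d, R.adjTo S d

theorem Rect.adj_iff {R S : Rect} : R.Adj S ↔
    R.adjTo S .left ∨ R.adjTo S .right ∨ R.adjTo S .top ∨ R.adjTo S .bottom := by
  constructor
  · rintro ⟨d, h⟩
    cases d <;> tauto
  · rintro (h | h | h | h) <;> exact ⟨_, h⟩

theorem Rect.Adj.symm {R S : Rect} (h : R.Adj S) : S.Adj R := by
  rw [Rect.adj_iff] at *
  simp only [Rect.adjTo_left, Rect.adjTo_right, Rect.adjTo_top, Rect.adjTo_bottom] at *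
  grind

theorem Rect.Adj.disjoint_inter {R S : Rect} (h : R.Adj S) : Disjoint R.inter S.inter := by
  rw [Set.disjoint_left]
  rintro ⟨x, y⟩ h1 h2
  rw [Rect.mem_inter] at h1 h2
  rw [Rect.adj_iff] at h
  simp only [Rect.adjTo_left, Rect.adjTo_right, Rect.adjTo_top, Rect.adjTo_bottom] at h
  grind

/-- The signed coordinate of the `d`-side of a rectangle. -/
def Rect.side (R : Rect) : Dir → ℝ
  | .right => R.x2
  | .left => -R.x1
  | .top => R.y2
  | .bottom => -R.y1

/-- Half of the perimeter. -/
def Rect.semiperimeter (R : Rect) : ℝ := R.x2 - R.x1 + (R.y2 - R.y1)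

/-! ### Orthogonally convex sets -/

/-- Orthogonal convexity of a planar set. -/
def OrthoConvexSet (U : Set (ℝ × ℝ)) : Prop :=
  (∀ ⦃x x' z y : ℝ⦄, (x, y) ∈ U → (x', y) ∈ U → x ≤ z → z ≤ x' → (z, y) ∈ U) ∧
  (∀ ⦃y y' z x : ℝ⦄, (x, y) ∈ U → (x, y') ∈ U → y ≤ z → z ≤ y' → (x, z) ∈ U)

/-- Gluing a rectangle whose left and top sides lie in an orthogonally convex set keeps the set
orthogonally convex. -/
theorem OrthoConvexSet.glue {U V : Set (ℝ × ℝ)} (hU : OrthoConvexSet U) {a a' b c : ℝ}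
    (hleft : ∀ y, c ≤ y → y ≤ b → (a, y) ∈ U) (htop : ∀ x, a ≤ x → x ≤ a' → (x, b) ∈ U)
    (hV : ∀ x y, (x, y) ∈ V ↔ (x, y) ∈ U ∨ (a ≤ x ∧ x ≤ a' ∧ c ≤ y ∧ y ≤ b)) :
    OrthoConvexSet V := by
  obtain ⟨hrow, hcol⟩ := hU
  constructor
  · intro x x' z y h h' hz hz'
    rw [hV] at h h' ⊢
    by_cases hq : a ≤ z ∧ z ≤ a' ∧ c ≤ y ∧ y ≤ b
    · exact Or.inr hq
    left
    rcases h with h | ⟨h1, h2, h3, h4⟩ <;> rcases h' with h' | ⟨h1', h2', h3', h4'⟩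
    · exact hrow h h' hz hz'
    · refine hrow h (hleft y h3' h4') hz ?_
      by_contra hc
      exact hq ⟨by linarith, by linarith, h3', h4'⟩
    · exact hrow (hleft y h3 h4) h' (by linarith) hz'
    · exact absurd ⟨by linarith, by linarith, h3, h4⟩ hq
  · intro y y' z x h h' hz hz'
    rw [hV] at h h' ⊢
    by_cases hq : a ≤ x ∧ x ≤ a' ∧ c ≤ z ∧ z ≤ b
    · exact Or.inr hq
    left
    rcases h with h | ⟨h1, h2, h3, h4⟩ <;> rcases h' with h' | ⟨h1', h2', h3', h4'⟩
    · exact hcol h h' hz hz'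
    · exact hcol h (htop x h1' h2') hz (by linarith)
    · refine hcol (htop x h1 h2) h' ?_ hz'
      by_contra hc
      exact hq ⟨h1, h2, by linarith, by linarith⟩
    · exact absurd ⟨h1, h2, by linarith, by linarith⟩ hq

theorem exists_between_of_finite {ι : Type} [Fintype ι] (f : ι → ℝ) {a b : ℝ} (hab : a < b) :
    ∃ z, a ≤ z ∧ z < b ∧ ∀ j, f j < b → f j < z := by
  classical
  have hfin : ∀ s : Finset ι, ∃ z, a ≤ z ∧ z < b ∧ ∀ j ∈ s, f j < b → f j < z := by
    intro s
    induction s using Finset.induction_on with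
    | empty => exact ⟨a, le_rfl, hab, by simp⟩
    | insert j s _ ih =>
      obtain ⟨z, h1, h2, h3⟩ := ih
      by_cases hj : f j < b
      · obtain ⟨w, hw1, hw2⟩ := exists_between (max_lt h2 hj)
        rw [max_lt_iff] at hw1
        refine ⟨w, by linarith, hw2, ?_⟩
        intro k hk hkb
        rcases Finset.mem_insert.1 hk with rfl | hk
        · exact hw1.2
        · exact (h3 k hk hkb).trans hw1.1
      · refine ⟨z, h1, h2, ?_⟩
        intro k hk hkb
        rcases Finset.mem_insert.1 hk with rfl | hk
        · exact absurd hkb hj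
        · exact h3 k hk hkb
  obtain ⟨z, h1, h2, h3⟩ := hfin Finset.univ
  exact ⟨z, h1, h2, fun j => h3 j (Finset.mem_univ j)⟩

namespace RectComplex

variable {ι : Type} [Fintype ι]

theorem ext_cell {C D : RectComplex ι} (h : ∀ j, C.cell j = D.cell j) : C = D := by
  obtain ⟨c, _, _⟩ := C
  obtain ⟨e, _, _⟩ := D
  obtain rfl : c = e := funext h
  rfl

theorem mem_union {C : RectComplex ι} {z : ℝ × ℝ} :
    z ∈ C.union ↔ ∃ j, z ∈ (C.cell j).toSet := by
  simp [RectComplex.union]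

theorem orthoConvex_iff {C : RectComplex ι} : C.OrthoConvex ↔ OrthoConvexSet C.union := by
  constructor
  · rintro ⟨h1, h2⟩
    exact ⟨fun x x' z y h h' hz hz' => (h1 y).out h h' ⟨hz, hz'⟩,
      fun y y' z x h h' hz hz' => (h2 x).out h h' ⟨hz, hz'⟩⟩
  · rintro ⟨h1, h2⟩
    exact ⟨fun y => ⟨fun x h x' h' z hz => h1 h h' hz.1 hz.2⟩,
      fun x => ⟨fun y h y' h' z hz => h2 h h' hz.1 hz.2⟩⟩

theorem adj_of_mem (C : RectComplex ι) {j k : ι} (hjk : j ≠ k) {z : ℝ × ℝ}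
    (hj : z ∈ (C.cell j).toSet) (hk : z ∈ (C.cell k).toSet) : (C.cell j).Adj (C.cell k) := by
  rcases C.meet j k hjk with h | h
  · exact absurd hk (Set.disjoint_left.1 h hj)
  · exact h

/-- A family of rectangles any two of which are adjacent as soon as they meet is a complex. -/
def ofAdj (cell : ι → Rect)
    (h : ∀ j k, j ≠ k → ∀ x y, (x, y) ∈ (cell j).toSet → (x, y) ∈ (cell k).toSet →
      (cell j).Adj (cell k)) : RectComplex ι where
  cell := cell
  disjInt j k hjk := by
    rw [Set.disjoint_left]
    rintro ⟨x, y⟩ hj hk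
    refine Set.disjoint_left.1 (h j k hjk x y ?_ ?_).disjoint_inter hj hk
    · exact ⟨hj.1.le, hj.2.1.le, hj.2.2.1.le, hj.2.2.2.le⟩
    · exact ⟨hk.1.le, hk.2.1.le, hk.2.2.1.le, hk.2.2.2.le⟩
  meet j k hjk := by
    by_cases hd : Disjoint (cell j).toSet (cell k).toSet
    · exact Or.inl hd
    · obtain ⟨⟨x, y⟩, h1, h2⟩ := Set.not_disjoint_iff.1 hd
      exact Or.inr (h j k hjk x y h1 h2)

theorem separated (C : RectComplex ι) {j k : ι} (hjk : j ≠ k) :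
    (C.cell j).x2 ≤ (C.cell k).x1 ∨ (C.cell k).x2 ≤ (C.cell j).x1 ∨
    (C.cell j).y2 ≤ (C.cell k).y1 ∨ (C.cell k).y2 ≤ (C.cell j).y1 := by
  by_contra! hc
  obtain ⟨h1, h2, h3, h4⟩ := hc
  obtain ⟨x, hx⟩ := exists_between (max_lt (lt_min (C.cell j).hx h2) (lt_min h1 (C.cell k).hx))
  obtain ⟨y, hy⟩ := exists_between (max_lt (lt_min (C.cell j).hy h4) (lt_min h3 (C.cell k).hy))
  simp only [max_lt_iff, lt_min_iff] at hx hy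
  have hj : (x, y) ∈ (C.cell j).inter := Rect.mem_inter.2 (by tauto)
  exact Set.disjoint_left.1 (C.disjInt j k hjk) hj (Rect.mem_inter.2 (by tauto))

/-- Adjacencies survive when cells grow only across sides without neighbors. -/
theorem extends_of_grow {C C' : RectComplex ι}
    (h : ∀ j d, (C.cell j).side d ≤ (C'.cell j).side d ∧
      ((∃ k, (C.cell j).adjTo (C.cell k) d) → (C'.cell j).side d = (C.cell j).side d)) :
    C'.Extends C := by
  intro j k d hd
  have hk : (C.cell k).adjTo (C.cell j) d.neg := by
    cases d <;> simp only [Dir.neg, Rect.adjTo_left, Rect.adjTo_right, Rect.adjTo_top,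
      Rect.adjTo_bottom] at hd ⊢ <;> exact ⟨hd.1, hd.2.2, hd.2.1⟩
  have e1 := (h j d).2 ⟨k, hd⟩
  have e2 := (h k d.neg).2 ⟨j, hk⟩
  have j1 := (h j .left).1
  have j2 := (h j .right).1
  have j3 := (h j .top).1
  have j4 := (h j .bottom).1
  have k1 := (h k .left).1
  have k2 := (h k .right).1
  have k3 := (h k .top).1
  have k4 := (h k .bottom).1
  clear h hk
  cases d <;> simp only [Dir.neg, Rect.side, Rect.adjTo_left, Rect.adjTo_right, Rect.adjTo_top,
    Rect.adjTo_bottom] at * <;> refine ⟨?_, ?_, ?_⟩ <;> linarith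

/-- A cell has a right neighbor, meeting the line at height `y`, once the complex reaches
beyond the cell at that height. -/
theorem exists_right_neighbor {C : RectComplex ι} (hC : OrthoConvexSet C.union) {j : ι}
    {y w : ℝ} (hy1 : (C.cell j).y1 < y) (hy2 : y < (C.cell j).y2) (hw : (C.cell j).x2 < w)
    (hmem : (w, y) ∈ C.union) :
    ∃ k, (C.cell j).adjTo (C.cell k) .right ∧ (C.cell k).y1 ≤ y ∧ y ≤ (C.cell k).y2 := by
  have hj := (C.cell j).hx
  obtain ⟨z, h1, h2, h3⟩ := exists_between_of_finite (fun k => -(C.cell k).x1) (neg_lt_neg hw)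
  have hz : (-z, y) ∈ C.union :=
    hC.1 (mem_union.2 ⟨j, Rect.mem_toSet.2 ⟨hj.le, le_rfl, hy1.le, hy2.le⟩⟩) hmem
      (by linarith) (by linarith)
  obtain ⟨k, hk⟩ := mem_union.1 hz
  rw [Rect.mem_toSet] at hk
  have hk1 : (C.cell k).x1 ≤ (C.cell j).x2 := by
    by_contra hc
    have := h3 k (by linarith)
    linarith
  have hjk : j ≠ k := by
    rintro rfl
    linarith
  have hadj := C.adj_of_mem hjk (z := ((C.cell j).x2, y)) ⟨hj.le, le_rfl, hy1.le, hy2.le⟩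
    ⟨hk1, by linarith, hk.2.2.1, hk.2.2.2⟩
  rw [Rect.adj_iff] at hadj
  refine ⟨k, ?_, hk.2.2⟩
  simp only [Rect.adjTo_left, Rect.adjTo_right, Rect.adjTo_top, Rect.adjTo_bottom] at hadj ⊢
  grind

end RectComplex

/-! ### Symmetries of the plane -/

/-- A symmetry of the plane together with its action on rectangles and an involution of the
directions. -/
structure PlaneSymmetry where
  rect : Rect → Rect
  dir : Dir → Dir
  point : ℝ × ℝ → ℝ × ℝ
  dir_dir : ∀ d, dir (dir d) = d
  mem_rect : ∀ R z, z ∈ (rect R).toSet ↔ point z ∈ R.toSet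
  adjTo_rect : ∀ R S d, (rect R).adjTo (rect S) (dir d) ↔ R.adjTo S d
  side_rect : ∀ R d, (rect R).side (dir d) = R.side d
  semiperimeter_rect : ∀ R, (rect R).semiperimeter = R.semiperimeter
  orthoConvexSet_preimage : ∀ U, OrthoConvexSet U → OrthoConvexSet (point ⁻¹' U)

namespace PlaneSymmetry

/-- Reflection in a vertical axis. -/
def reflectX : PlaneSymmetry where
  rect R := ⟨-R.x2, -R.x1, R.y1, R.y2, neg_lt_neg R.hx, R.hy⟩
  dir
    | .left => .right
    | .right => .left
    | .top => .top
    | .bottom => .bottom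
  point z := (-z.1, z.2)
  dir_dir d := by cases d <;> rfl
  mem_rect R z := by
    obtain ⟨x, y⟩ := z
    simp only [Rect.mem_toSet]
    grind
  adjTo_rect R S d := by
    cases d <;> simp only [Rect.adjTo_left, Rect.adjTo_right, Rect.adjTo_top,
      Rect.adjTo_bottom] <;> grind
  side_rect R d := by cases d <;> simp [Rect.side]
  semiperimeter_rect R := by simp only [Rect.semiperimeter]; ring
  orthoConvexSet_preimage U hU := by
    constructor
    · intro x x' z y h h' hz hz'
      exact hU.1 h' h (neg_le_neg hz') (neg_le_neg hz)
    · intro y y' z x h h' hz hz'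
      exact hU.2 h h' hz hz'

/-- Exchange of the two coordinates. -/
def swap : PlaneSymmetry where
  rect R := ⟨R.y1, R.y2, R.x1, R.x2, R.hy, R.hx⟩
  dir
    | .left => .bottom
    | .right => .top
    | .top => .right
    | .bottom => .left
  point z := (z.2, z.1)
  dir_dir d := by cases d <;> rfl
  mem_rect R z := by
    obtain ⟨x, y⟩ := z
    simp only [Rect.mem_toSet]
    tauto
  adjTo_rect R S d := by
    cases d <;> simp only [Rect.adjTo_left, Rect.adjTo_right, Rect.adjTo_top, Rect.adjTo_bottom]
  side_rect R d := by cases d <;> rfl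
  semiperimeter_rect R := by simp only [Rect.semiperimeter]; ring
  orthoConvexSet_preimage U hU := by
    constructor
    · intro x x' z y h h' hz hz'
      exact hU.2 h h' hz hz'
    · intro y y' z x h h' hz hz'
      exact hU.1 h h' hz hz'

/-- Reflection in a horizontal axis. -/
def reflectY : PlaneSymmetry where
  rect R := ⟨R.x1, R.x2, -R.y2, -R.y1, R.hx, neg_lt_neg R.hy⟩
  dir
    | .left => .left
    | .right => .right
    | .top => .bottom
    | .bottom => .top
  point z := (z.1, -z.2)
  dir_dir d := by cases d <;> rfl
  mem_rect R z := by
    obtain ⟨x, y⟩ := z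
    simp only [Rect.mem_toSet]
    grind
  adjTo_rect R S d := by
    cases d <;> simp only [Rect.adjTo_left, Rect.adjTo_right, Rect.adjTo_top,
      Rect.adjTo_bottom] <;> grind
  side_rect R d := by cases d <;> simp [Rect.side]
  semiperimeter_rect R := by simp only [Rect.semiperimeter]; ring
  orthoConvexSet_preimage U hU := by
    constructor
    · intro x x' z y h h' hz hz'
      exact hU.1 h h' hz hz'
    · intro y y' z x h h' hz hz'
      exact hU.2 h' h (neg_le_neg hz') (neg_le_neg hz)

end PlaneSymmetry

namespace RectComplex

variable {ι : Type} [Fintype ι]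

/-- The image of a complex under a symmetry. -/
def map (C : RectComplex ι) (σ : PlaneSymmetry) : RectComplex ι :=
  ofAdj (fun j => σ.rect (C.cell j)) (by
    intro j k hjk x y hj hk
    rw [σ.mem_rect] at hj hk
    obtain ⟨d, hd⟩ := C.adj_of_mem hjk hj hk
    exact ⟨σ.dir d, (σ.adjTo_rect _ _ _).2 hd⟩)

theorem cell_map (C : RectComplex ι) (σ : PlaneSymmetry) (j : ι) :
    (C.map σ).cell j = σ.rect (C.cell j) := rfl

theorem union_map (C : RectComplex ι) (σ : PlaneSymmetry) :
    (C.map σ).union = σ.point ⁻¹' C.union := by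
  ext z
  simp only [mem_union, Set.mem_preimage, cell_map, σ.mem_rect]

theorem orthoConvexSet_map {C : RectComplex ι} (σ : PlaneSymmetry)
    (hC : OrthoConvexSet C.union) : OrthoConvexSet (C.map σ).union := by
  rw [union_map]
  exact σ.orthoConvexSet_preimage _ hC

theorem adjTo_map {C : RectComplex ι} (σ : PlaneSymmetry) {j k : ι} {d : Dir} :
    ((C.map σ).cell j).adjTo ((C.map σ).cell k) d ↔
      (C.cell j).adjTo (C.cell k) (σ.dir d) := by
  rw [cell_map, cell_map, ← σ.adjTo_rect _ _ (σ.dir d), σ.dir_dir]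

theorem Extends.of_map {C C' : RectComplex ι} (σ : PlaneSymmetry) (h : C'.Extends (C.map σ)) :
    (C'.map σ).Extends C := by
  intro j k d hd
  rw [adjTo_map]
  apply h
  rwa [adjTo_map, σ.dir_dir]

theorem extreme_iff {C : RectComplex ι} {i : ι} {d : Dir} :
    C.Extreme i d ↔ ∀ j, (C.cell j).side d ≤ (C.cell i).side d := by
  cases d <;> simp [Extreme, Rect.side]

theorem Extensible.of_map {C : RectComplex ι} (σ : PlaneSymmetry) {i : ι} {d : Dir}
    (h : (C.map σ).Extensible i (σ.dir d)) : C.Extensible i d := by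
  obtain ⟨C', ⟨hext, R, hR⟩, hextr⟩ := h
  refine ⟨C'.map σ, ⟨hext.of_map σ, σ.rect R, ?_⟩, ?_⟩
  · ext z
    rw [union_map, hR, σ.mem_rect, Set.mem_preimage]
  · rw [extreme_iff] at hextr ⊢
    intro j
    have := hextr j
    rw [cell_map, cell_map]
    rwa [← σ.side_rect _ (σ.dir d), ← σ.side_rect _ (σ.dir d), σ.dir_dir] at this

theorem exists_left_neighbor {C : RectComplex ι} (hC : OrthoConvexSet C.union) {j : ι}
    {y w : ℝ} (hy1 : (C.cell j).y1 < y) (hy2 : y < (C.cell j).y2) (hw : w < (C.cell j).x1)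
    (hmem : (w, y) ∈ C.union) : ∃ k, (C.cell j).adjTo (C.cell k) .left := by
  obtain ⟨k, hk, -⟩ := exists_right_neighbor
    (orthoConvexSet_map PlaneSymmetry.reflectX hC) (j := j) (y := y) (w := -w) hy1 hy2
    (neg_lt_neg hw) (by rw [union_map]; simpa [PlaneSymmetry.reflectX] using hmem)
  exact ⟨k, (adjTo_map _).1 hk⟩

theorem exists_bottom_neighbor {C : RectComplex ι} (hC : OrthoConvexSet C.union) {j : ι}
    {x w : ℝ} (hx1 : (C.cell j).x1 < x) (hx2 : x < (C.cell j).x2) (hw : w < (C.cell j).y1)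
    (hmem : (x, w) ∈ C.union) : ∃ k, (C.cell j).adjTo (C.cell k) .bottom := by
  obtain ⟨k, hk⟩ := exists_left_neighbor
    (orthoConvexSet_map PlaneSymmetry.swap hC) (j := j) (y := x) (w := w) hx1 hx2 hw
    (by rw [union_map]; exact hmem)
  exact ⟨k, (adjTo_map _).1 hk⟩

/-- If a cell has no bottom neighbor, a horizontal line below it cannot pass from a point of the
complex under (or left-aligned with) the cell to a point of the complex further right. -/
theorem not_mem_of_no_bottom_neighbor {C : RectComplex ι} (hC : OrthoConvexSet C.union) {j : ι}
    (hj : ∀ k, ¬ (C.cell j).adjTo (C.cell k) .bottom) {a x y : ℝ}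
    (ha1 : (C.cell j).x1 ≤ a) (ha2 : a < (C.cell j).x2) (hy : y < (C.cell j).y1)
    (ha : (a, y) ∈ C.union) (hx : a < x) : (x, y) ∉ C.union := by
  intro hmem
  obtain ⟨w, hw1, hw2⟩ := exists_between (lt_min hx ha2)
  rw [lt_min_iff] at hw2
  obtain ⟨k, hk⟩ := exists_bottom_neighbor hC (j := j) (x := w) (w := y) (by linarith) hw2.2 hy
    (hC.1 ha hmem hw1.le hw2.1.le)
  exact hj k hk

end RectComplex

/-! ### Growing a complex -/

namespace RectComplex

variable {ι : Type} [Fintype ι]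

/-- The signed coordinates of the sides of the cells. -/
def sideValues (C : RectComplex ι) : Set ℝ :=
  {v | ∃ k d, v = (C.cell k).side d ∨ v = -(C.cell k).side d}

/-- The total size of the cells. -/
def size (C : RectComplex ι) : ℝ := ∑ j, (C.cell j).semiperimeter

/-- `C.Grows i d C'`: the orthogonally convex extension `C'` of `C` has larger cells with sides on
the grid lines of `C`, and cell `i` has no `d`-neighbor in it. -/
structure Grows (C : RectComplex ι) (i : ι) (d : Dir) (C' : RectComplex ι) : Prop where
  extends_self : C'.Extends C
  orthoConvexSet : OrthoConvexSet C'.union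
  no_neighbor : ∀ j, ¬ (C'.cell i).adjTo (C'.cell j) d
  side_mem : ∀ j e, (C'.cell j).side e ∈ C.sideValues
  size_lt : C.size < C'.size

/-- A complex that can no longer grow while keeping cell `i` free of `d`-neighbors, for a
horizontal direction `d`. -/
structure Stuck (C : RectComplex ι) (i : ι) (d : Dir) : Prop where
  horizontal : d = .left ∨ d = .right
  orthoConvexSet : OrthoConvexSet C.union
  no_neighbor : ∀ j, ¬ (C.cell i).adjTo (C.cell j) d
  not_grows : ∀ C', ¬ C.Grows i d C'

theorem size_map (C : RectComplex ι) (σ : PlaneSymmetry) : (C.map σ).size = C.size := by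
  simp only [size, cell_map, σ.semiperimeter_rect]

theorem sideValues_map (C : RectComplex ι) (σ : PlaneSymmetry) :
    (C.map σ).sideValues ⊆ C.sideValues := by
  rintro v ⟨k, d, hv⟩
  refine ⟨k, σ.dir d, ?_⟩
  rwa [cell_map, ← σ.dir_dir d, σ.side_rect] at hv

theorem Grows.of_map {C C' : RectComplex ι} {i : ι} {d : Dir} (σ : PlaneSymmetry)
    (h : (C.map σ).Grows i (σ.dir d) C') : C.Grows i d (C'.map σ) where
  extends_self := h.extends_self.of_map σ
  orthoConvexSet := orthoConvexSet_map σ h.orthoConvexSet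
  no_neighbor j := by
    rw [adjTo_map]
    exact h.no_neighbor j
  side_mem j e := by
    apply sideValues_map C σ
    rw [cell_map, ← σ.dir_dir e, σ.side_rect]
    exact h.side_mem j _
  size_lt := by
    rw [size_map, ← size_map C σ]
    exact h.size_lt

theorem Stuck.map {C : RectComplex ι} {i : ι} {d : Dir} (h : C.Stuck i d) (σ : PlaneSymmetry)
    (hσ : σ.dir d = .left ∨ σ.dir d = .right) : (C.map σ).Stuck i (σ.dir d) where
  horizontal := hσ
  orthoConvexSet := orthoConvexSet_map σ h.orthoConvexSet
  no_neighbor j := by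
    rw [adjTo_map, σ.dir_dir]
    exact h.no_neighbor j
  not_grows C' hC' := h.not_grows _ hC'.of_map

theorem Stuck.reflectX {C : RectComplex ι} {i : ι} {d : Dir} (h : C.Stuck i d) :
    (C.map .reflectX).Stuck i (PlaneSymmetry.reflectX.dir d) := by
  refine h.map _ ?_
  rcases h.horizontal with rfl | rfl
  · exact Or.inr rfl
  · exact Or.inl rfl

theorem Stuck.reflectY {C : RectComplex ι} {i : ι} {d : Dir} (h : C.Stuck i d) :
    (C.map .reflectY).Stuck i (PlaneSymmetry.reflectY.dir d) := by
  refine h.map _ ?_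
  rcases h.horizontal with rfl | rfl
  · exact Or.inl rfl
  · exact Or.inr rfl

theorem side_mem_sideValues (C : RectComplex ι) (k : ι) (d : Dir) :
    (C.cell k).side d ∈ C.sideValues := ⟨k, d, Or.inl rfl⟩

theorem neg_mem_sideValues {C : RectComplex ι} {v : ℝ} (hv : v ∈ C.sideValues) :
    -v ∈ C.sideValues := by
  obtain ⟨k, d, rfl | rfl⟩ := hv
  · exact ⟨k, d, Or.inr rfl⟩
  · exact ⟨k, d, Or.inl (neg_neg _)⟩

theorem finite_sideValues (C : RectComplex ι) : C.sideValues.Finite := by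
  have : C.sideValues = ⋃ k, ⋃ d ∈ ({.left, .right, .top, .bottom} : Set Dir),
      {(C.cell k).side d, -(C.cell k).side d} := by
    ext v
    simp only [sideValues, Set.mem_ofPred_eq, Set.mem_iUnion, Set.mem_insert_iff,
      Set.mem_singleton_iff, exists_prop]
    constructor
    · rintro ⟨k, d, h⟩
      exact ⟨k, d, by cases d <;> simp, h⟩
    · rintro ⟨k, d, -, h⟩
      exact ⟨k, d, h⟩
  rw [this]
  refine Set.finite_iUnion fun k => Set.Finite.biUnion (by simp) fun d _ => by simp

/-- Some extension of the complex is stuck. -/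
theorem exists_stuck (C : RectComplex ι) (hC : OrthoConvexSet C.union) {i : ι} {d : Dir}
    (hd : d = .left ∨ d = .right) (hi : ∀ j, ¬ (C.cell i).adjTo (C.cell j) d) :
    ∃ M : RectComplex ι, M.Extends C ∧ M.Stuck i d := by
  let S : Set (RectComplex ι) := {M | M.Extends C ∧ OrthoConvexSet M.union ∧
    (∀ j, ¬ (M.cell i).adjTo (M.cell j) d) ∧ ∀ j e, (M.cell j).side e ∈ C.sideValues}
  have hfin : S.Finite := by
    let F : RectComplex ι → ι → Dir → ℝ := fun M j e => (M.cell j).side e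
    have hF : Function.Injective F := by
      intro M M' h
      refine ext_cell fun j => ?_
      have h' : ∀ e, (M.cell j).side e = (M'.cell j).side e := fun e =>
        congrFun (congrFun h j) e
      have h1 := h' .left
      have h2 := h' .right
      have h3 := h' .top
      have h4 := h' .bottom
      simp only [Rect.side] at h1 h2 h3 h4
      ext <;> linarith
    have : Finite Dir := by
      refine Set.finite_univ_iff.1 (Set.Finite.subset
        (s := ({.left, .right, .top, .bottom} : Set Dir)) (by simp) ?_)
      intro d _
      cases d <;> simp
    have hpi : (Set.univ.pi fun _ : ι => Set.univ.pi fun _ : Dir => C.sideValues).Finite :=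
      Set.Finite.pi fun _ => Set.Finite.pi fun _ => C.finite_sideValues
    refine (hpi.preimage hF.injOn).subset ?_
    rintro M ⟨-, -, -, hM⟩
    simpa [F] using hM
  obtain ⟨M, hM, hmax⟩ := Set.exists_max_image S size hfin
    ⟨C, fun _ _ _ h => h, hC, hi, C.side_mem_sideValues⟩
  obtain ⟨h1, h2, h3, h4⟩ := hM
  refine ⟨M, h1, hd, h2, h3, fun M' hM' => ?_⟩
  refine absurd (hmax M' ⟨fun j k e h => hM'.extends_self _ _ _ (h1 _ _ _ h),
    hM'.orthoConvexSet, hM'.no_neighbor, fun j e => ?_⟩) (not_le.2 hM'.size_lt)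
  obtain ⟨k, e', h | h⟩ := hM'.side_mem j e
  · rw [h]
    exact h4 _ _
  · rw [h]
    exact neg_mem_sideValues (h4 _ _)

end RectComplex

namespace RectComplex

variable {ι : Type} [Fintype ι]

/-- Filling a notch below the cell `e`: the bottom of `e` moves down to height `t`, and the cells in
`S`, whose upper right corner is at height `t` on the line through the left side of `e`, move their
right sides to that of `e`. -/
theorem exists_notch_filling {C : RectComplex ι} (hC : OrthoConvexSet C.union) {e : ι}
    (he : ∀ k, ¬ (C.cell e).adjTo (C.cell k) .bottom) {c t : ℝ} (ht : t < (C.cell e).y1)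
    (hct : c ≤ t) (hleft : ∀ y, c ≤ y → y ≤ (C.cell e).y1 → ((C.cell e).x1, y) ∈ C.union)
    {S : ι → Prop} (hSc : (∃ j, S j) ∨ c = t)
    (hS : ∀ j, S j → (C.cell j).x2 = (C.cell e).x1 ∧ (C.cell j).y2 = t ∧ (C.cell j).y1 = c ∧
      ∀ k, ¬ (C.cell j).adjTo (C.cell k) .right)
    (hSt : ∀ j, (C.cell j).x2 = (C.cell e).x1 → (C.cell j).y2 = t → S j)
    (htC : t ∈ C.sideValues) :
    ∃ C' : RectComplex ι, C'.Extends C ∧ OrthoConvexSet C'.union ∧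
      (∀ j d, (C'.cell j).side d ∈ C.sideValues) ∧ C.size < C'.size ∧
      ∀ j, (C'.cell j).x1 = (C.cell j).x1 ∧ (C'.cell j).y2 = (C.cell j).y2 ∧
        (S j ∧ (C'.cell j).x2 = (C.cell e).x2 ∨ ¬ S j ∧ (C'.cell j).x2 = (C.cell j).x2) ∧
        (j = e ∧ (C'.cell j).y1 = t ∨ j ≠ e ∧ (C'.cell j).y1 = (C.cell j).y1) := by
  classical
  have hex := (C.cell e).hx
  have hey := (C.cell e).hy
  have hempty : ∀ x y, c ≤ y → y < (C.cell e).y1 → (C.cell e).x1 < x → (x, y) ∉ C.union :=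
    fun x y hy hy' hx =>
      not_mem_of_no_bottom_neighbor hC he le_rfl hex hy' (hleft y hy hy'.le) hx
  have heS : ¬ S e := by
    intro h
    have := (hS e h).2.1
    linarith
  have hx : ∀ j, (C.cell j).x1 < if S j then (C.cell e).x2 else (C.cell j).x2 := by
    intro j
    have := (C.cell j).hx
    split_ifs with h
    · have := (hS j h).1
      linarith
    · exact this
  have hy : ∀ j, (if j = e then t else (C.cell j).y1) < (C.cell j).y2 := by
    intro j
    split_ifs with h
    · subst h
      linarith
    · exact (C.cell j).hy
  let cell : ι → Rect := fun j => ⟨(C.cell j).x1, if S j then (C.cell e).x2 else (C.cell j).x2,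
    if j = e then t else (C.cell j).y1, (C.cell j).y2, hx j, hy j⟩
  have hcell : ∀ j, (cell j).x1 = (C.cell j).x1 ∧ (cell j).y2 = (C.cell j).y2 ∧
      (S j ∧ (cell j).x2 = (C.cell e).x2 ∨ ¬ S j ∧ (cell j).x2 = (C.cell j).x2) ∧
      (j = e ∧ (cell j).y1 = t ∨ j ≠ e ∧ (cell j).y1 = (C.cell j).y1) := by
    intro j
    refine ⟨rfl, rfl, ?_, ?_⟩
    · by_cases h : S j <;> simp [cell, h]
    · by_cases h : j = e <;> simp [cell, h]
  clear_value cell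
  have hce := hcell e
  have adj_base : ∀ q x y, q ≠ e → (x, y) ∈ (cell e).toSet → (x, y) ∈ (cell q).toSet →
      (cell e).Adj (cell q) := by
    intro q x y hq h h'
    have hcq := hcell q
    have hqy := (C.cell q).hy
    have hqx := (C.cell q).hx
    by_cases hSq : S q
    · refine ⟨.bottom, Rect.adjTo_bottom.2 ?_⟩
      have := hS q hSq
      grind
    · rw [Rect.mem_toSet] at h h'
      by_cases hyb : (C.cell e).y1 ≤ y
      · have hadj := C.adj_of_mem (Ne.symm hq) (z := (x, y))
          (Rect.mem_toSet.2 (by grind)) (Rect.mem_toSet.2 (by grind))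
        have := he q
        rw [Rect.adj_iff] at hadj ⊢
        simp only [Rect.adjTo_left, Rect.adjTo_right, Rect.adjTo_top, Rect.adjTo_bottom] at *
        grind
      · have hmem : ((C.cell q).x2, y) ∈ C.union :=
          mem_union.2 ⟨q, Rect.mem_toSet.2 (by grind)⟩
        have hqx2 : (C.cell q).x2 = (C.cell e).x1 := by
          by_contra hne
          refine hempty _ y ?_ ?_ ?_ hmem <;> grind
        have := hSt q hqx2
        refine ⟨.left, Rect.adjTo_left.2 ?_⟩
        grind
  have adj_extended : ∀ p q x y, p ≠ q → q ≠ e → S p → (x, y) ∈ (cell p).toSet →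
      (x, y) ∈ (cell q).toSet → (cell p).Adj (cell q) := by
    intro p q x y hpq hq hSp h h'
    have hpe : p ≠ e := by
      rintro rfl
      exact heS hSp
    have hcp := hcell p
    have hcq := hcell q
    obtain ⟨hp1, hp2, hp3, hp4⟩ := hS p hSp
    have hqx := (C.cell q).hx
    have hqy := (C.cell q).hy
    have hpx := (C.cell p).hx
    have hpy := (C.cell p).hy
    by_cases hSq : S q
    · have := hS q hSq
      have := C.separated hpq
      grind
    · rw [Rect.mem_toSet] at h h'
      by_cases hxa : x ≤ (C.cell e).x1
      · have hadj := C.adj_of_mem hpq (z := (x, y))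
          (Rect.mem_toSet.2 (by grind)) (Rect.mem_toSet.2 (by grind))
        have := hp4 q
        rw [Rect.adj_iff] at hadj ⊢
        simp only [Rect.adjTo_left, Rect.adjTo_right, Rect.adjTo_top, Rect.adjTo_bottom] at *
        grind
      · exfalso
        refine hempty x y ?_ ?_ ?_ (mem_union.2 ⟨q, Rect.mem_toSet.2 ?_⟩) <;> grind
  let C' : RectComplex ι := ofAdj cell (by
    intro p q hpq x y h h'
    by_cases hp : p = e
    · subst hp
      exact adj_base q x y (Ne.symm hpq) h h'
    by_cases hq : q = e
    · subst hq
      exact (adj_base p x y hpq h' h).symm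
    by_cases hSp : S p
    · exact adj_extended p q x y hpq hq hSp h h'
    by_cases hSq : S q
    · exact (adj_extended q p x y (Ne.symm hpq) hp hSq h' h).symm
    have hcp : cell p = C.cell p := by
      have := hcell p
      ext <;> grind
    have hcq : cell q = C.cell q := by
      have := hcell q
      ext <;> grind
    rw [hcp] at h ⊢
    rw [hcq] at h' ⊢
    exact C.adj_of_mem hpq h h')
  have hC' : ∀ j, C'.cell j = cell j := fun _ => rfl
  have hle : ∀ j, (C.cell j).x2 ≤ (cell j).x2 ∧ (cell j).y1 ≤ (C.cell j).y1 := by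
    intro j
    have := hcell j
    have := hS j
    grind
  refine ⟨C', ?_, ?_, ?_, ?_, hcell⟩
  · refine extends_of_grow fun j d => ?_
    rw [hC']
    have hj := hcell j
    have hlej := hle j
    cases d
    · simp only [Rect.side, hj.1, le_refl, implies_true, and_self]
    · refine ⟨hlej.1, ?_⟩
      rintro ⟨k, hk⟩
      have := (hS j · |>.2.2.2 k hk)
      simp only [Rect.side]
      tauto
    · simp only [Rect.side, hj.2.1, le_refl, implies_true, and_self]
    · refine ⟨neg_le_neg hlej.2, ?_⟩
      rintro ⟨k, hk⟩
      have : j ≠ e := by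
        rintro rfl
        exact he k hk
      simp only [Rect.side]
      grind
  · refine hC.glue (a := (C.cell e).x1) (a' := (C.cell e).x2) (b := (C.cell e).y1) (c := c)
      hleft (fun x hx hx' => mem_union.2 ⟨e, Rect.mem_toSet.2 ⟨hx, hx', le_rfl, hey.le⟩⟩) ?_
    intro x y
    simp only [mem_union, hC']
    constructor
    · rintro ⟨j, hj⟩
      by_cases hjC : (x, y) ∈ (C.cell j).toSet
      · exact Or.inl ⟨j, hjC⟩
      · right
        have := hcell j
        have := hS j
        rw [Rect.mem_toSet] at hj hjC
        grind
    · rintro (⟨j, hj⟩ | h)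
      · refine ⟨j, ?_⟩
        have := hcell j
        have := hle j
        rw [Rect.mem_toSet] at hj ⊢
        grind
      · by_cases hyt : t ≤ y
        · refine ⟨e, ?_⟩
          rw [Rect.mem_toSet]
          grind
        · obtain ⟨j, hj⟩ : ∃ j, S j := hSc.resolve_right (by rintro rfl; exact hyt h.2.2.1)
          refine ⟨j, ?_⟩
          have := hcell j
          have := hS j hj
          have := (C.cell j).hx
          have : j ≠ e := by
            rintro rfl
            exact heS hj
          rw [Rect.mem_toSet]
          grind
  · intro j d
    rw [hC']
    have hj := hcell j
    cases d
    · have h := C.side_mem_sideValues j .left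
      simp only [Rect.side] at h ⊢
      rwa [hj.1]
    · have h := C.side_mem_sideValues j .right
      have h' := C.side_mem_sideValues e .right
      simp only [Rect.side] at h h' ⊢
      rcases hj.2.2.1 with ⟨-, h1⟩ | ⟨-, h1⟩ <;> rwa [h1]
    · have h := C.side_mem_sideValues j .top
      simp only [Rect.side] at h ⊢
      rwa [hj.2.1]
    · have h := C.side_mem_sideValues j .bottom
      have h' := neg_mem_sideValues htC
      simp only [Rect.side] at h ⊢
      rcases hj.2.2.2 with ⟨-, h1⟩ | ⟨-, h1⟩ <;> rwa [h1]
  · refine Finset.sum_lt_sum (fun j _ => ?_) ⟨e, Finset.mem_univ e, ?_⟩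
    · rw [hC']
      have := hcell j
      have := hle j
      simp only [Rect.semiperimeter]
      linarith
    · rw [hC']
      have := hle e
      simp only [Rect.semiperimeter]
      grind

/-- In a stuck complex, a cell with a left neighbor reaching lower has a bottom neighbor. -/
theorem Stuck.exists_bottom_neighbor {C : RectComplex ι} {i : ι} {d : Dir} (hC : C.Stuck i d)
    {e l : ι} (hl : (C.cell e).adjTo (C.cell l) .left) (hlow : (C.cell l).y1 < (C.cell e).y1) :
    ∃ k, (C.cell e).adjTo (C.cell k) .bottom := by
  by_contra! he
  have hoc := hC.orthoConvexSet
  have hex := (C.cell e).hx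
  have hey := (C.cell e).hy
  have hlx := (C.cell l).hx
  have hlC := hl
  rw [Rect.adjTo_left] at hl
  obtain ⟨m, hm, hmin⟩ := Set.exists_min_image {k | (C.cell k).y1 ≤ (C.cell l).y1 ∧
    ∀ y, (C.cell k).y1 ≤ y → y ≤ (C.cell e).y1 → ((C.cell e).x1, y) ∈ C.union}
    (fun k => (C.cell k).y1) (Set.toFinite _)
    ⟨l, le_rfl, fun y hy hy' => mem_union.2 ⟨l, Rect.mem_toSet.2 (by grind)⟩⟩
  obtain ⟨hml, hmU⟩ := hm
  have hempty : ∀ x y, (C.cell m).y1 ≤ y → y < (C.cell e).y1 → (C.cell e).x1 < x →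
      (x, y) ∉ C.union := fun x y hy hy' hx =>
    not_mem_of_no_bottom_neighbor hoc he le_rfl hex hy' (hmU y hy hy'.le) hx
  by_cases hobs : d = .right ∧ (C.cell i).x2 = (C.cell e).x1 ∧ (C.cell m).y1 < (C.cell i).y2 ∧
      (C.cell i).y1 < (C.cell e).y2
  · obtain ⟨rfl, hi1, hi2, hi3⟩ := hobs
    have hix := (C.cell i).hx
    have hiy := (C.cell i).hy
    have hno := hC.no_neighbor
    have hie : i ≠ e := by
      rintro rfl
      linarith
    have hi4 : (C.cell i).y2 < (C.cell e).y1 := by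
      by_contra hc
      have heq : (C.cell i).y2 = (C.cell e).y1 := by
        refine le_antisymm (not_lt.1 fun hlt => hno e ?_) (not_lt.1 hc)
        exact Rect.adjTo_right.2 ⟨hi1, hi3, hlt⟩
      have hadj := C.adj_of_mem hie (z := ((C.cell e).x1, (C.cell e).y1))
        (Rect.mem_toSet.2 ⟨by linarith, by linarith, by linarith, by linarith⟩)
        (Rect.mem_toSet.2 ⟨by linarith, by linarith, by linarith, by linarith⟩)
      rw [Rect.adj_iff] at hadj
      simp only [Rect.adjTo_left, Rect.adjTo_right, Rect.adjTo_top, Rect.adjTo_bottom] at hadj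
      grind
    have hleft : ∀ y, (C.cell i).y1 ≤ y → y ≤ (C.cell e).y1 →
        ((C.cell e).x1, y) ∈ C.union := by
      intro y hy hy'
      by_cases h : (C.cell i).y2 ≤ y
      · exact hmU y (by linarith) hy'
      · exact mem_union.2 ⟨i, Rect.mem_toSet.2 (by grind)⟩
    obtain ⟨C', h1, h2, h3, h4, h5⟩ := exists_notch_filling hoc he hi4 hiy.le hleft
      (S := fun j => j = i) (Or.inl ⟨i, rfl⟩)
      (by rintro j rfl; exact ⟨hi1, rfl, rfl, hno⟩)
      (by
        intro j hj1 hj2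
        by_contra hne
        have := C.separated hne
        have := (C.cell j).hx
        have := (C.cell j).hy
        grind)
      (C.side_mem_sideValues i .top)
    refine hC.not_grows C' ⟨h1, h2, ?_, h3, h4⟩
    intro k hk
    rw [Rect.adjTo_right] at hk
    have hi5 := h5 i
    have hk5 := h5 k
    have hky := (C.cell k).hy
    have hkx := (C.cell k).hx
    refine not_mem_of_no_bottom_neighbor hoc he le_rfl hex
      (x := (C.cell k).x1) (y := max (C.cell i).y1 (C.cell k).y1) ?_ (hleft _ ?_ ?_) ?_
      (mem_union.2 ⟨k, Rect.mem_toSet.2 ?_⟩) <;> grind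
  · obtain ⟨C', h1, h2, h3, h4, h5⟩ := exists_notch_filling hoc he
      (t := (C.cell m).y1) (c := (C.cell m).y1) (by linarith) le_rfl hmU
      (S := fun _ => False) (Or.inr rfl) (fun _ h => h.elim)
      (by
        intro j hj1 hj2
        have hjx := (C.cell j).hx
        have hjy := (C.cell j).hy
        have := hmin j ⟨by linarith, fun y hy hy' => by
          by_cases h : (C.cell m).y1 ≤ y
          · exact hmU y h hy'
          · exact mem_union.2 ⟨j, Rect.mem_toSet.2 (by grind)⟩⟩
        linarith)
      (by simpa [Rect.side] using neg_mem_sideValues (C.side_mem_sideValues m .bottom))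
    refine hC.not_grows C' ⟨h1, h2, ?_, h3, h4⟩
    intro k hk
    have hno := hC.no_neighbor k
    have hnol := hC.no_neighbor l
    obtain ⟨hi1, hi2, ⟨hf, -⟩ | ⟨-, hi3⟩, hi4⟩ := h5 i
    · exact hf
    obtain ⟨hk1, hk2, ⟨hf, -⟩ | ⟨-, hk3⟩, hk4⟩ := h5 k
    · exact hf
    have hbeyond : ∀ j, (C.cell j).x1 = (C.cell e).x2 → (C.cell m).y1 < (C.cell j).y2 →
        (C.cell e).y1 < (C.cell j).y2 := by
      intro j hj1 hj2
      by_contra hc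
      have hjy := (C.cell j).hy
      have hjx := (C.cell j).hx
      refine hempty (C.cell j).x1 (max (C.cell m).y1 (C.cell j).y1) (le_max_left _ _)
        (max_lt (by linarith) (by linarith)) (by linarith)
        (mem_union.2 ⟨j, Rect.mem_toSet.2 ⟨le_rfl, hjx.le, le_max_right _ _,
          max_le hj2.le hjy.le⟩⟩)
    rcases hC.horizontal with rfl | rfl
    · rw [Rect.adjTo_left, hi1, hi2, hk2, hk3] at hk
      rw [Rect.adjTo_left] at hno
      rcases hi4 with ⟨rfl, -⟩ | ⟨-, hi4⟩
      · exact hnol hlC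
      rw [hi4] at hk
      rcases hk4 with ⟨rfl, hk4⟩ | ⟨-, hk4⟩
      · rw [hk4] at hk
        exact hno ⟨hk.1, hk.2.1, hbeyond i hk.1.symm hk.2.2⟩
      · rw [hk4] at hk
        exact hno hk
    · rw [Rect.adjTo_right, hk1, hi2, hk2, hi3] at hk
      rw [Rect.adjTo_right] at hno
      rcases hk4 with ⟨rfl, hk4⟩ | ⟨-, hk4⟩
      · rcases hi4 with ⟨rfl, hi4⟩ | ⟨-, hi4⟩
        · linarith
        · rw [hk4, hi4] at hk
          exact hobs ⟨rfl, hk.1, hk.2.2, hk.2.1⟩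
      · rw [hk4] at hk
        rcases hi4 with ⟨rfl, hi4⟩ | ⟨-, hi4⟩
        · rw [hi4] at hk
          exact hno ⟨hk.1, hbeyond k hk.1.symm hk.2.1, hk.2.2⟩
        · rw [hi4] at hk
          exact hno hk

end RectComplex

/-! ### Rectangular extensions -/

namespace RectComplex

variable {ι : Type} [Fintype ι]

/-- In a stuck complex, a line at height `y` through a cell with a right neighbor reaching above
`y` passes through a cell ending further right. -/
theorem Stuck.exists_right_of_neighbor {C : RectComplex ι} {i : ι} {d : Dir} (hC : C.Stuck i d)
    {a : ι} {y : ℝ} (hy : (C.cell a).y1 ≤ y)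
    (h : ∃ k, (C.cell a).adjTo (C.cell k) .right ∧ y < (C.cell k).y2) :
    ∃ k, (C.cell k).y1 ≤ y ∧ y ≤ (C.cell k).y2 ∧ (C.cell a).x2 < (C.cell k).x2 := by
  obtain ⟨k, ⟨hk, hky⟩, hmin⟩ := Set.exists_min_image
    {k | (C.cell a).adjTo (C.cell k) .right ∧ y < (C.cell k).y2} (fun k => (C.cell k).y1)
    (Set.toFinite _) h
  have hkx := (C.cell k).hx
  rw [Rect.adjTo_right] at hk
  by_cases hlow : (C.cell k).y1 ≤ y
  · exact ⟨k, hlow, hky.le, by linarith⟩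
  exfalso
  push Not at hlow
  obtain ⟨f, hf⟩ := hC.exists_bottom_neighbor (e := k) (l := a)
    (Rect.adjTo_left.2 ⟨hk.1, hk.2.2, hk.2.1⟩) (by linarith)
  rw [Rect.adjTo_bottom] at hf
  have hfx := (C.cell f).hx
  have hfy := (C.cell f).hy
  obtain ⟨z, hz1, hz2⟩ := exists_between (max_lt hlow (hf.1 ▸ hfy))
  obtain ⟨w, hw1, hw2⟩ := exists_between (max_lt (lt_min hfx hf.2.2) (lt_min hf.2.1 hkx))
  simp only [max_lt_iff, lt_min_iff] at hz1 hw1 hw2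
  obtain ⟨g, hg, hg1, hg2⟩ := exists_right_neighbor hC.orthoConvexSet (j := a) (y := z) (w := w)
    (by linarith) (by linarith) (by linarith)
    (mem_union.2 ⟨f, Rect.mem_toSet.2
      ⟨by linarith, by linarith, by linarith, by linarith⟩⟩)
  have := hmin g ⟨hg, by linarith⟩
  linarith

/-- In a stuck complex, every line at the height of some cell passes through a cell without right
neighbors. -/
theorem Stuck.exists_no_right_neighbor {C : RectComplex ι} {i : ι} {d : Dir} (hC : C.Stuck i d)
    {j : ι} {y : ℝ} (hy1 : (C.cell j).y1 ≤ y) (hy2 : y ≤ (C.cell j).y2) :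
    ∃ k, (C.cell k).y1 ≤ y ∧ y ≤ (C.cell k).y2 ∧
      ∀ l, ¬ (C.cell k).adjTo (C.cell l) .right := by
  obtain ⟨a, ⟨ha1, ha2⟩, hmax⟩ := Set.exists_max_image
    {k | (C.cell k).y1 ≤ y ∧ y ≤ (C.cell k).y2} (fun k => (C.cell k).x2)
    (Set.toFinite _) ⟨j, hy1, hy2⟩
  refine ⟨a, ha1, ha2, fun l hl => ?_⟩
  have hl' := Rect.adjTo_right.1 hl
  have hlx := (C.cell l).hx
  rcases lt_or_ge y (C.cell l).y2 with h2 | h2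
  · obtain ⟨k, hk1, hk2, hk3⟩ := hC.exists_right_of_neighbor ha1 ⟨l, hl, h2⟩
    have := hmax k ⟨hk1, hk2⟩
    linarith
  rcases lt_or_ge (C.cell l).y1 y with h1 | h1
  · obtain ⟨k, hk1, hk2, hk3⟩ := hC.reflectY.exists_right_of_neighbor (a := a) (y := -y)
      (neg_le_neg ha2) ⟨l, (adjTo_map _).2 hl, neg_lt_neg h1⟩
    have := hmax k ⟨neg_le_neg_iff.1 hk2, neg_le_neg_iff.1 hk1⟩
    exact absurd hk3 (not_lt.2 this)
  · have := (C.cell l).hy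
    linarith

theorem Stuck.exists_no_left_neighbor {C : RectComplex ι} {i : ι} {d : Dir} (hC : C.Stuck i d)
    {j : ι} {y : ℝ} (hy1 : (C.cell j).y1 ≤ y) (hy2 : y ≤ (C.cell j).y2) :
    ∃ k, (C.cell k).y1 ≤ y ∧ y ≤ (C.cell k).y2 ∧
      ∀ l, ¬ (C.cell k).adjTo (C.cell l) .left := by
  obtain ⟨k, hk1, hk2, hk3⟩ := hC.reflectX.exists_no_right_neighbor (j := j) (y := y) hy1 hy2
  exact ⟨k, hk1, hk2, fun l hl => hk3 l ((adjTo_map _).2 hl)⟩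

/-- Either the horizontal lines just above height `u` meet the complex, or nothing lies above `u`,
or there is a maximal gap `(u, v)` in the heights of the complex. -/
theorem exists_gap_end (C : RectComplex ι) (u : ℝ) : ∃ v,
    (v = u ∧ ((∃ e, (C.cell e).y1 ≤ u ∧ u < (C.cell e).y2) ∨ ∀ e, (C.cell e).y2 ≤ u)) ∨
    (u < v ∧ (∃ e, (C.cell e).y1 = v) ∧ ∀ e, (C.cell e).y2 ≤ u ∨ v ≤ (C.cell e).y1) := by
  by_cases h1 : ∃ e, (C.cell e).y1 ≤ u ∧ u < (C.cell e).y2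
  · exact ⟨u, Or.inl ⟨rfl, Or.inl h1⟩⟩
  by_cases h2 : ∀ e, (C.cell e).y2 ≤ u
  · exact ⟨u, Or.inl ⟨rfl, Or.inr h2⟩⟩
  push Not at h1 h2
  obtain ⟨e, he, hmin⟩ := Set.exists_min_image {e | u < (C.cell e).y2} (fun e => (C.cell e).y1)
    (Set.toFinite _) h2
  refine ⟨(C.cell e).y1, Or.inr ⟨?_, ⟨e, rfl⟩, fun f => ?_⟩⟩
  · by_contra hc
    exact absurd he (not_lt.2 (h1 e (not_lt.1 hc)))
  · rcases le_or_gt (C.cell f).y2 u with h | h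
    · exact Or.inl h
    · exact Or.inr (hmin f h)

/-- If every horizontal line meeting an orthogonally convex complex passes through a cell without
left neighbors and through one without right neighbors, then cells without right neighbors are
right-extensible. -/
theorem extensible_right_of_rows {C : RectComplex ι} (hC : OrthoConvexSet C.union)
    (hright : ∀ j y, (C.cell j).y1 ≤ y → y ≤ (C.cell j).y2 →
      ∃ k, (C.cell k).y1 ≤ y ∧ y ≤ (C.cell k).y2 ∧ ∀ l, ¬ (C.cell k).adjTo (C.cell l) .right)
    (hleft : ∀ j y, (C.cell j).y1 ≤ y → y ≤ (C.cell j).y2 →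
      ∃ k, (C.cell k).y1 ≤ y ∧ y ≤ (C.cell k).y2 ∧ ∀ l, ¬ (C.cell k).adjTo (C.cell l) .left)
    {i : ι} (hi : ∀ j, ¬ (C.cell i).adjTo (C.cell j) .right) : C.Extensible i .right := by
  classical
  have : Nonempty ι := ⟨i⟩
  have hx := fun j => (C.cell j).hx
  have hy := fun j => (C.cell j).hy
  obtain ⟨jl, hjl⟩ := Finite.exists_min fun j => (C.cell j).x1
  obtain ⟨jr, hjr⟩ := Finite.exists_max fun j => (C.cell j).x2
  obtain ⟨jb, hjb⟩ := Finite.exists_min fun j => (C.cell j).y1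
  obtain ⟨jt, hjt⟩ := Finite.exists_max fun j => (C.cell j).y2
  have hL : ∀ j, ∃ v, v ≤ (C.cell j).x1 ∧
      (((∃ k, (C.cell j).adjTo (C.cell k) .left) ∧ v = (C.cell j).x1) ∨
      ((∀ k, ¬ (C.cell j).adjTo (C.cell k) .left) ∧ v = (C.cell jl).x1)) := by
    intro j
    by_cases h : ∃ k, (C.cell j).adjTo (C.cell k) .left
    · exact ⟨_, le_rfl, Or.inl ⟨h, rfl⟩⟩
    · push Not at h
      exact ⟨_, hjl j, Or.inr ⟨h, rfl⟩⟩
  have hR : ∀ j, ∃ v, (C.cell j).x2 ≤ v ∧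
      (((∃ k, (C.cell j).adjTo (C.cell k) .right) ∧ v = (C.cell j).x2) ∨
      ((∀ k, ¬ (C.cell j).adjTo (C.cell k) .right) ∧ v = (C.cell jr).x2)) := by
    intro j
    by_cases h : ∃ k, (C.cell j).adjTo (C.cell k) .right
    · exact ⟨_, le_rfl, Or.inl ⟨h, rfl⟩⟩
    · push Not at h
      exact ⟨_, hjr j, Or.inr ⟨h, rfl⟩⟩
  choose L hLle hL using hL
  choose R hRle hR using hR
  choose g hg using C.exists_gap_end
  have hgle : ∀ u, u ≤ g u := fun u => by
    rcases hg u with ⟨h, -⟩ | ⟨h, -⟩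
    · exact h.ge
    · exact h.le
  let cell' : ι → Rect := fun j => ⟨L j, R j, (C.cell j).y1, g (C.cell j).y2,
    (hLle j).trans_lt ((hx j).trans_le (hRle j)), (hy j).trans_le (hgle _)⟩
  have hside : ∀ p q x, x ≤ R p → L q ≤ x → (C.cell p).y1 < (C.cell q).y2 →
      (C.cell q).y1 < (C.cell p).y2 → (C.cell p).x2 ≤ (C.cell q).x1 →
      (cell' p).Adj (cell' q) := by
    intro p q x hp hq h1 h2 hle
    obtain ⟨y, hy1, hy2⟩ := exists_between (max_lt (lt_min (hy p) h1) (lt_min h2 (hy q)))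
    simp only [max_lt_iff, lt_min_iff] at hy1 hy2
    have hxp := hx p
    have hxq := hx q
    obtain ⟨k, hk, -⟩ := exists_right_neighbor hC (j := p) (y := y) (w := (C.cell q).x2)
      hy1.1 hy2.1 (by linarith)
      (mem_union.2 ⟨q, Rect.mem_toSet.2 ⟨hxq.le, le_rfl, hy1.2.le, hy2.2.le⟩⟩)
    obtain ⟨l, hl⟩ := exists_left_neighbor hC (j := q) (y := y) (w := (C.cell p).x1)
      hy1.2 hy2.2 (by linarith)
      (mem_union.2 ⟨p, Rect.mem_toSet.2 ⟨le_rfl, hxp.le, hy1.1.le, hy2.1.le⟩⟩)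
    have hRp : R p = (C.cell p).x2 := by
      rcases hR p with h | h
      · exact h.2
      · exact absurd hk (h.1 k)
    have hLq : L q = (C.cell q).x1 := by
      rcases hL q with h | h
      · exact h.2
      · exact absurd hl (h.1 l)
    refine ⟨.right, Rect.adjTo_right.2 ⟨?_, h1.trans_le (hgle _), h2.trans_le (hgle _)⟩⟩
    change R p = L q
    linarith
  have hstack : ∀ p q, p ≠ q → ∀ x y, (x, y) ∈ (cell' p).toSet → (x, y) ∈ (cell' q).toSet →
      (C.cell p).y2 ≤ (C.cell q).y1 → (cell' p).Adj (cell' q) := by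
    intro p q hpq x y hp hq hle
    rw [Rect.mem_toSet] at hp hq
    simp only [cell'] at hp hq
    have hgq : g (C.cell p).y2 = (C.cell q).y1 := by
      rcases hg (C.cell p).y2 with ⟨h, -⟩ | ⟨-, -, h⟩
      · linarith
      · rcases h q with h | h
        · linarith [hy q]
        · linarith
    have hcorner : ∀ v, (C.cell p).x1 ≤ v → v ≤ (C.cell p).x2 → (C.cell q).x1 ≤ v →
        v ≤ (C.cell q).x2 → (C.cell p).x1 < (C.cell q).x2 ∧ (C.cell q).x1 < (C.cell p).x2 := by
      intro v h1 h2 h3 h4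
      have hyp := hy p
      have hyq := hy q
      have hvp : (v, (C.cell p).y2) ∈ (C.cell p).toSet := ⟨h1, h2, hyp.le, le_rfl⟩
      have hvq : (v, (C.cell q).y1) ∈ (C.cell q).toSet := ⟨h3, h4, le_rfl, hyq.le⟩
      rcases hle.eq_or_lt with he | hlt
      · have hadj := C.adj_of_mem hpq hvp (he ▸ hvq)
        rw [Rect.adj_iff] at hadj
        simp only [Rect.adjTo_left, Rect.adjTo_right, Rect.adjTo_top,
          Rect.adjTo_bottom] at hadj
        grind
      · exfalso
        obtain ⟨z, hz1, hz2⟩ := exists_between hlt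
        obtain ⟨e, he⟩ := mem_union.1
          (hC.2 (mem_union.2 ⟨p, hvp⟩) (mem_union.2 ⟨q, hvq⟩) hz1.le hz2.le)
        rw [Rect.mem_toSet] at he
        rcases hg (C.cell p).y2 with ⟨h, -⟩ | ⟨-, -, h⟩
        · linarith
        · rcases h e with h | h <;> linarith
    have hxp := hx p
    have hxq := hx q
    have h1 := hLle p
    have h2 := hLle q
    have h3 := hRle p
    have h4 := hRle q
    have h5 := hjl p
    have h6 := hjl q
    have h7 := hjr p
    have h8 := hjr q
    refine ⟨.top, Rect.adjTo_top.2 ⟨hgq, ?_, ?_⟩⟩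
    · change L p < R q
      by_contra hc
      have e1 : L p = (C.cell p).x1 := by
        rcases hL p with h | h
        · exact h.2
        · linarith [h.2]
      have e2 : R q = (C.cell q).x2 := by
        rcases hR q with h | h
        · exact h.2
        · linarith [h.2]
      have := hcorner x (by linarith) (by linarith) (by linarith) (by linarith)
      linarith
    · change L q < R p
      by_contra hc
      have e1 : L q = (C.cell q).x1 := by
        rcases hL q with h | h
        · exact h.2
        · linarith [h.2]
      have e2 : R p = (C.cell p).x2 := by
        rcases hR p with h | h
        · exact h.2
        · linarith [h.2]
      have := hcorner x (by linarith) (by linarith) (by linarith) (by linarith)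
      linarith
  have hadj : ∀ p q, p ≠ q → ∀ x y, (x, y) ∈ (cell' p).toSet → (x, y) ∈ (cell' q).toSet →
      (cell' p).Adj (cell' q) := by
    intro p q hpq x y hp hq
    rcases le_or_gt (C.cell p).y2 (C.cell q).y1 with h1 | h1
    · exact hstack p q hpq x y hp hq h1
    rcases le_or_gt (C.cell q).y2 (C.cell p).y1 with h2 | h2
    · exact (hstack q p hpq.symm x y hq hp h2).symm
    rcases C.separated hpq with h | h | h | h
    · exact hside p q x hp.2.1 hq.1 h2 h1 h
    · exact (hside q p x hq.2.1 hp.1 h1 h2 h).symm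
    · exact absurd h (not_le.2 h1)
    · exact absurd h (not_le.2 h2)
  have hrow : ∀ x y, (C.cell jl).x1 ≤ x → x ≤ (C.cell jr).x2 →
      (∃ j, (C.cell j).y1 ≤ y ∧ y ≤ (C.cell j).y2) →
      ∃ j, L j ≤ x ∧ x ≤ R j ∧ (C.cell j).y1 ≤ y ∧ y ≤ (C.cell j).y2 := by
    rintro x y hx1 hx2 ⟨j, hj1, hj2⟩
    obtain ⟨a, ha1, ha2, ha⟩ := hright j y hj1 hj2
    obtain ⟨b, hb1, hb2, hb⟩ := hleft j y hj1 hj2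
    have hRa : R a = (C.cell jr).x2 := by
      rcases hR a with ⟨⟨k, hk⟩, -⟩ | h
      · exact absurd hk (ha k)
      · exact h.2
    have hLb : L b = (C.cell jl).x1 := by
      rcases hL b with ⟨⟨k, hk⟩, -⟩ | h
      · exact absurd hk (hb k)
      · exact h.2
    by_cases hxa : (C.cell a).x1 ≤ x
    · exact ⟨a, (hLle a).trans hxa, hRa ▸ hx2, ha1, ha2⟩
    by_cases hxb : x ≤ (C.cell b).x2
    · exact ⟨b, hLb ▸ hx1, hxb.trans (hRle b), hb1, hb2⟩
    push Not at hxa hxb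
    obtain ⟨k, hk1, hk2, hk⟩ := mem_union.1 (hC.1
      (mem_union.2 ⟨b, Rect.mem_toSet.2 ⟨(hx b).le, le_rfl, hb1, hb2⟩⟩)
      (mem_union.2 ⟨a, Rect.mem_toSet.2 ⟨le_rfl, (hx a).le, ha1, ha2⟩⟩) hxb.le hxa.le)
    exact ⟨k, (hLle k).trans hk1, hk2.trans (hRle k), hk⟩
  refine ⟨ofAdj cell' hadj, ⟨?_, ⟨(C.cell jl).x1, (C.cell jr).x2, (C.cell jb).y1,
    (C.cell jt).y2, (hx jl).trans_le (hjr jl), (hy jb).trans_le (hjt jb)⟩, ?_⟩, ?_⟩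
  · apply extends_of_grow
    intro j d
    cases d with
    | left =>
      refine ⟨neg_le_neg (hLle j), ?_⟩
      rintro ⟨k, hk⟩
      rcases hL j with h | h
      · exact congrArg Neg.neg h.2
      · exact absurd hk (h.1 k)
    | right =>
      refine ⟨hRle j, ?_⟩
      rintro ⟨k, hk⟩
      rcases hR j with h | h
      · exact h.2
      · exact absurd hk (h.1 k)
    | top =>
      refine ⟨hgle _, ?_⟩
      rintro ⟨k, hk⟩
      rw [Rect.adjTo_top] at hk
      have hyk := hy k
      rcases hg (C.cell j).y2 with h | ⟨h1, -, h2⟩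
      · exact h.1
      · rcases h2 k with h2 | h2 <;> linarith
    | bottom => exact ⟨le_rfl, fun _ => rfl⟩
  · ext ⟨x, y⟩
    rw [mem_union, Rect.mem_toSet]
    constructor
    · rintro ⟨j, hj⟩
      obtain ⟨h1, h2, h3, h4⟩ := hj
      change L j ≤ x at h1
      change x ≤ R j at h2
      change (C.cell j).y1 ≤ y at h3
      change y ≤ g (C.cell j).y2 at h4
      refine ⟨le_trans ?_ h1, h2.trans ?_, (hjb j).trans h3, h4.trans ?_⟩
      · rcases hL j with h | h
        · exact h.2 ▸ hjl j
        · exact h.2.ge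
      · rcases hR j with h | h
        · exact h.2 ▸ hjr j
        · exact h.2.le
      · rcases hg (C.cell j).y2 with h | ⟨-, ⟨e, he⟩, -⟩
        · exact h.1.le.trans (hjt j)
        · exact he ▸ (hy e).le.trans (hjt e)
    · rintro ⟨hx1, hx2, hy1, hy2⟩
      simp only at hx1 hx2 hy1 hy2
      by_cases hyC : ∃ j, (C.cell j).y1 ≤ y ∧ y ≤ (C.cell j).y2
      · obtain ⟨j, h1, h2, h3, h4⟩ := hrow x y hx1 hx2 hyC
        exact ⟨j, h1, h2, h3, h4.trans (hgle _)⟩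
      push Not at hyC
      obtain ⟨m, hm, hmax⟩ := Set.exists_max_image {e | (C.cell e).y2 ≤ y}
        (fun e => (C.cell e).y2) (Set.toFinite _) ⟨jb, (hyC jb hy1).le⟩
      change (C.cell m).y2 ≤ y at hm
      have hbelow : ∀ e, (C.cell e).y1 ≤ y → (C.cell e).y2 ≤ (C.cell m).y2 := fun e he =>
        hmax e (hyC e he).le
      obtain ⟨j, h1, h2, h3, h4⟩ := hrow x (C.cell m).y2 hx1 hx2 ⟨m, (hy m).le, le_rfl⟩
      refine ⟨j, h1, h2, h3.trans hm, ?_⟩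
      change y ≤ g (C.cell j).y2
      rw [le_antisymm (hbelow j (h3.trans hm)) h4]
      rcases hg (C.cell m).y2 with ⟨h, ⟨e, he1, he2⟩ | h'⟩ | ⟨h, ⟨e, he⟩, -⟩
      · exact absurd he2 (not_lt.2 (hbelow e (he1.trans hm)))
      · linarith [h' jt]
      · by_contra hc
        have := hbelow e (by linarith)
        linarith [hy e]
  · intro j
    change R j ≤ R i
    have hRi : R i = (C.cell jr).x2 := by
      rcases hR i with ⟨⟨k, hk⟩, -⟩ | h
      · exact absurd hk (hi k)
      · exact h.2
    rw [hRi]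
    rcases hR j with h | h
    · exact h.2 ▸ hjr j
    · exact h.2.le

theorem Extensible.of_extends {C M : RectComplex ι} {i : ι} {d : Dir} (hM : M.Extends C)
    (h : M.Extensible i d) : C.Extensible i d := by
  obtain ⟨C', ⟨h1, h2⟩, h3⟩ := h
  exact ⟨C', ⟨fun j k e hjk => h1 j k e (hM j k e hjk), h2⟩, h3⟩

theorem extensible_right {C : RectComplex ι} (hC : OrthoConvexSet C.union) {i : ι}
    (hi : ∀ j, ¬ (C.cell i).adjTo (C.cell j) .right) : C.Extensible i .right := by
  obtain ⟨M, hM, hs⟩ := C.exists_stuck hC (Or.inr rfl) hi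
  exact (extensible_right_of_rows hs.orthoConvexSet
    (fun j y => hs.exists_no_right_neighbor) (fun j y => hs.exists_no_left_neighbor)
    hs.no_neighbor).of_extends hM

theorem extensible_of_map {C : RectComplex ι} (hC : OrthoConvexSet C.union) (σ : PlaneSymmetry)
    {i : ι} {d e : Dir} (hd : σ.dir d = e)
    (h : ∀ D : RectComplex ι, OrthoConvexSet D.union →
      (∀ j, ¬ (D.cell i).adjTo (D.cell j) e) → D.Extensible i e)
    (hi : ∀ j, ¬ (C.cell i).adjTo (C.cell j) d) : C.Extensible i d := by
  refine Extensible.of_map σ (hd ▸ h _ (orthoConvexSet_map σ hC) fun j => ?_)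
  rw [adjTo_map, ← hd, σ.dir_dir]
  exact hi j

theorem extensible_left {C : RectComplex ι} (hC : OrthoConvexSet C.union) {i : ι}
    (hi : ∀ j, ¬ (C.cell i).adjTo (C.cell j) .left) : C.Extensible i .left :=
  extensible_of_map hC .reflectX (e := .right) rfl (fun _ h => extensible_right h) hi

theorem extensible_of_no_neighbor {C : RectComplex ι} (hC : OrthoConvexSet C.union) {i : ι}
    {d : Dir} (hi : ∀ j, ¬ (C.cell i).adjTo (C.cell j) d) : C.Extensible i d := by
  cases d with
  | left => exact extensible_left hC hi
  | right => exact extensible_right hC hi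
  | top => exact extensible_of_map hC .swap (e := .right) rfl (fun _ h => extensible_right h) hi
  | bottom => exact extensible_of_map hC .swap (e := .left) rfl (fun _ h => extensible_left h) hi

theorem Extensible.no_neighbor {C : RectComplex ι} {i : ι} {d : Dir} (h : C.Extensible i d)
    (j : ι) : ¬ (C.cell i).adjTo (C.cell j) d := by
  intro hj
  obtain ⟨C', ⟨hext, -⟩, hextr⟩ := h
  have hadj := hext i j d hj
  have hle := extreme_iff.1 hextr j
  have hx := (C'.cell j).hx
  have hy := (C'.cell j).hy
  cases d <;> simp only [Rect.side, Rect.adjTo_left, Rect.adjTo_right, Rect.adjTo_top,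
    Rect.adjTo_bottom] at hadj hle <;> linarith [hadj.1]

end RectComplex

/-- In an orthogonally convex rectangle complex, a cell `i` is
`d`-extensible if and only if no cell of the complex is adjacent to it on its `d`-side. -/
theorem extensible_iff_no_neighbor {ι : Type} [Fintype ι] (C : RectComplex ι)
    (hconv : C.OrthoConvex) (i : ι) (d : Dir) :
    C.Extensible i d ↔ ¬ ∃ j : ι, j ≠ i ∧ (C.cell i).adjTo (C.cell j) d := by
  constructor
  · rintro h ⟨j, -, hj⟩
    exact h.no_neighbor j hj
  · intro h
    refine RectComplex.extensible_of_no_neighbor (RectComplex.orthoConvex_iff.1 hconv)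
      fun j hj => h ⟨j, ?_, hj⟩
    rintro rfl
    have hx := (C.cell j).hx
    have hy := (C.cell j).hy
    cases d <;> simp only [Rect.adjTo_left, Rect.adjTo_right, Rect.adjTo_top,
      Rect.adjTo_bottom] at hj <;> linarith [hj.1]
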